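/- arXiv:0907.2051 — 2 statements merged into one kernel-verified Lean document; each statement's English description precedes it below -/
import Mathlib

section
/- There exist absolute constants c > 0 and α ≥ 0 such that for all finite A, B ⊆ F_p with 2 ≤ |B| ≤ |A| ≤ p^{1/2}, one has |A+B|^{10}·|AB|⁴ ≥ c(log|B|)^{−α}·|A|⁶|B|⁹. -/
open Finset Pointwise

/-!
By Cauchy–Schwarz there is `b₀ ∈ B` for which the intersections `b • A ∩ b₀ • A` with `b ∈ B` have
total size at least `|A|² |B| / |AB|`, so, up to a factor `log |B|`, there are `N` and `C ⊆ B` with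
`N |C| ≥ |A|² |B| / |AB|` such that all intersections with `b ∈ C` have at least `N` elements.

Walking from `0` in steps of `1` through the difference quotients of `C` yields `b₁, b₂, b₃, b₄ ∈ C`
such that `(b₁ - b₂) C + (b₃ - b₄) (C + C)` has at least `|C|² / 2` elements. By Ruzsa's triangle
inequality, a summand `± b Z` with `b ∈ C` may be exchanged for `± b₀ A` at the cost of a factor
`|A + Z| / N`. Four exchanges give `|C|² N⁴ ≪ |A + B|² |A + B + B|² |2A - 2A|`, and Plünnecke's
inequalities bound the right-hand side by powers of `|A + B|`, after `A` has been replaced by a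
subset of at least half its size.
-/

section Counting

variable {ι α β : Type*} [DecidableEq β]

theorem sq_sum_card_le_card_mul_sum_card_inter (s : Finset ι) {S : ι → Finset β} {T : Finset β}
    (hST : ∀ i ∈ s, S i ⊆ T) :
    (∑ i ∈ s, #(S i)) ^ 2 ≤ #T * ∑ i ∈ s, ∑ j ∈ s, #(S i ∩ S j) := by
  have hcard : ∑ i ∈ s, #(S i) = ∑ x ∈ T, ∑ i ∈ s, if x ∈ S i then 1 else 0 := by
    rw [sum_comm]
    refine sum_congr rfl fun i hi ↦ ?_
    rw [← card_filter, filter_mem_eq_inter, inter_eq_right.2 (hST i hi)]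
  have hinter : ∑ i ∈ s, ∑ j ∈ s, #(S i ∩ S j) =
      ∑ x ∈ T, (∑ i ∈ s, if x ∈ S i then 1 else 0) ^ 2 := by
    simp_rw [sq, sum_mul_sum, ite_zero_mul_ite_zero, ← mem_inter, mul_one]
    rw [sum_comm (s := T)]
    refine sum_congr rfl fun i hi ↦ ?_
    rw [sum_comm (s := T)]
    refine sum_congr rfl fun j _ ↦ ?_
    rw [← card_filter, filter_mem_eq_inter,
      inter_eq_right.2 (inter_subset_left.trans (hST i hi))]
  rw [hcard, hinter]
  exact sq_sum_le_card_mul_sum_sq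

theorem sum_card_collisions_le {R : Finset ι} {S : Finset α} {f : ι → α → β}
    (hf : ∀ x ∈ S, ∀ y ∈ S, x ≠ y → #{r ∈ R | f r x = f r y} ≤ 1) :
    ∑ r ∈ R, ∑ x ∈ S, ∑ y ∈ S, #({f r x} ∩ {f r y}) ≤ #S * #R + #S * #S := by
  classical
  have hpair : ∀ x ∈ S, ∀ y ∈ S,
      ∑ r ∈ R, #({f r x} ∩ {f r y}) ≤ (if x = y then #R else 0) + 1 := by
    intro x hx y hy
    have hcollision (r : ι) : #({f r x} ∩ {f r y}) = if f r x = f r y then 1 else 0 := by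
      split_ifs with h <;> simp [h]
    simp_rw [hcollision, ← card_filter]
    split_ifs with hxy
    · exact (card_filter_le _ _).trans (Nat.le_succ _)
    · simpa only [zero_add] using hf x hx y hy hxy
  calc ∑ r ∈ R, ∑ x ∈ S, ∑ y ∈ S, #({f r x} ∩ {f r y})
      = ∑ x ∈ S, ∑ y ∈ S, ∑ r ∈ R, #({f r x} ∩ {f r y}) := by
        rw [sum_comm]
        exact sum_congr rfl fun x _ ↦ sum_comm
    _ ≤ ∑ x ∈ S, ∑ y ∈ S, ((if x = y then #R else 0) + 1) :=
        sum_le_sum fun x hx ↦ sum_le_sum fun y hy ↦ hpair x hx y hy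
    _ = #S * #R + #S * #S := by
        simp +contextual [sum_add_distrib, mul_add]

theorem exists_card_le_two_mul_card_image {R : Finset ι} {S : Finset α} {f : ι → α → β}
    (hR : R.Nonempty) (hSR : #S ≤ #R)
    (hf : ∀ x ∈ S, ∀ y ∈ S, x ≠ y → #{r ∈ R | f r x = f r y} ≤ 1) :
    ∃ r ∈ R, #S ≤ 2 * #(S.image (f r)) := by
  obtain ⟨r, hr, hEr⟩ : ∃ r ∈ R, ∑ x ∈ S, ∑ y ∈ S, #({f r x} ∩ {f r y}) ≤ 2 * #S := by
    refine exists_le_of_sum_le hR ((sum_card_collisions_le hf).trans ?_)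
    calc #S * #R + #S * #S ≤ #S * #R + #S * #R := by gcongr
      _ = ∑ _r ∈ R, 2 * #S := by rw [sum_const, smul_eq_mul]; ring
  refine ⟨r, hr, ?_⟩
  rcases S.eq_empty_or_nonempty with rfl | hS
  · simp only [card_empty, zero_le]
  refine Nat.le_of_mul_le_mul_right ?_ hS.card_pos
  calc #S * #S = (∑ x ∈ S, #{f r x}) ^ 2 := by simp [sq]
    _ ≤ #(S.image (f r)) * ∑ x ∈ S, ∑ y ∈ S, #({f r x} ∩ {f r y}) :=
      sq_sum_card_le_card_mul_sum_card_inter S fun x hx ↦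
        singleton_subset_iff.2 (mem_image_of_mem _ hx)
    _ ≤ #(S.image (f r)) * (2 * #S) := by gcongr
    _ = 2 * #(S.image (f r)) * #S := by ring

end Counting

section Rearrangement

variable {ι K : Type*} [Field K] [LinearOrder K] [IsStrictOrderedRing K] {s : Finset ι} {f : ι → K}

-- If the values of `f` are listed in decreasing order, then the `k`-th one is at most `M / k`.
theorem sum_le_harmonic_mul {M : K} (hf : ∀ i ∈ s, 0 ≤ f i)
    (hM : ∀ i ∈ s, f i * #{j ∈ s | f i ≤ f j} ≤ M) :
    ∑ i ∈ s, f i ≤ harmonic #s * M := by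
  classical
  induction s using Finset.induction_on_min_value f with
  | empty => simp
  | insert a s ha hmin ih =>
    have hsum : ∑ i ∈ s, f i ≤ harmonic #s * M := by
      refine ih (fun i hi ↦ hf i (mem_insert_of_mem hi)) fun i hi ↦ ?_
      refine le_trans ?_ (hM i (mem_insert_of_mem hi))
      have := hf i (mem_insert_of_mem hi)
      gcongr
      exact subset_insert a s
    have hfa : f a ≤ (#s + 1 : K)⁻¹ * M := by
      have hall : {j ∈ insert a s | f a ≤ f j} = insert a s :=
        filter_true_of_mem (forall_mem_insert _ _ _ |>.2 ⟨le_rfl, hmin⟩)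
      have := hM a (mem_insert_self a s)
      rw [hall, card_insert_of_notMem ha] at this
      push_cast at this
      rwa [le_inv_mul_iff₀' (by positivity)]
    rw [sum_insert ha, card_insert_of_notMem ha, harmonic_succ]
    push_cast
    linarith

theorem exists_sum_le_harmonic_mul (hs : s.Nonempty) (hf : ∀ i ∈ s, 0 ≤ f i) :
    ∃ i ∈ s, ∑ j ∈ s, f j ≤ harmonic #s * (f i * #{j ∈ s | f i ≤ f j}) := by
  obtain ⟨i, hi, hmax⟩ := exists_max_image s (fun i ↦ f i * #{j ∈ s | f i ≤ f j}) hs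
  exact ⟨i, hi, sum_le_harmonic_mul hf hmax⟩

end Rearrangement

section PluenneckePetridis

variable {G : Type*} [AddCommGroup G] [DecidableEq G]

theorem exists_subset_forall_card_add_mul_le {D : Finset G} (hD : D.Nonempty) (B : Finset G) :
    ∃ X ⊆ D, X.Nonempty ∧ ∀ Y ⊆ D, #(X + B) * #Y ≤ #(Y + B) * #X := by
  obtain ⟨X, hX, hmin⟩ := exists_min_image (D.powerset.erase ∅)
    (fun X ↦ (#(X + B) : ℚ≥0) / #X) ⟨D, by simp [hD.ne_empty]⟩
  simp only [mem_erase, mem_powerset, ne_eq, ← nonempty_iff_ne_empty] at hX hmin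
  refine ⟨X, hX.2, hX.1, fun Y hY ↦ ?_⟩
  rcases Y.eq_empty_or_nonempty with rfl | hYne
  · simp
  have hratio := hmin Y ⟨hYne, hY⟩
  rw [div_le_div_iff₀ (by exact_mod_cast hX.1.card_pos) (by exact_mod_cast hYne.card_pos)] at hratio
  exact_mod_cast hratio

theorem exists_subset_card_add_add_mul_sq_le {D : Finset G} (hD : D.Nonempty) (B : Finset G) :
    ∃ X ⊆ D, X.Nonempty ∧ #(X + (B + B)) * #D ^ 2 ≤ #(D + B) ^ 2 * #X := by
  obtain ⟨X, hXD, hX, hmin⟩ := exists_subset_forall_card_add_mul_le hD B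
  have hpetridis : #(X + (B + B)) * #X ≤ #(X + B) ^ 2 := by
    have := pluennecke_petridis_inequality_add B fun Y hY ↦ hmin Y (hY.trans hXD)
    rwa [add_comm B X, add_assoc, ← sq] at this
  refine ⟨X, hXD, hX, Nat.le_of_mul_le_mul_right ?_ hX.card_pos⟩
  calc #(X + (B + B)) * #D ^ 2 * #X = #(X + (B + B)) * #X * #D ^ 2 := by ring
    _ ≤ #(X + B) ^ 2 * #D ^ 2 := by gcongr
    _ = (#(X + B) * #D) ^ 2 := by ring
    _ ≤ (#(D + B) * #X) ^ 2 := Nat.pow_le_pow_left (hmin D subset_rfl) 2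
    _ = #(D + B) ^ 2 * #X * #X := by ring

-- A maximal subset with the second property contains half of `A`: otherwise the previous lemma,
-- applied to its complement, enlarges it.
theorem exists_large_subset_card_add_add_mul_le (A B : Finset G) :
    ∃ A' ⊆ A, #A ≤ 2 * #A' ∧ #(A' + (B + B)) * #A ≤ 4 * #(A + B) ^ 2 := by
  rcases A.eq_empty_or_nonempty with rfl | hA
  · exact ⟨∅, by simp⟩
  obtain ⟨A', hA', hmax⟩ := exists_max_image
    {X ∈ A.powerset | #(X + (B + B)) * #A ^ 2 ≤ 4 * #(A + B) ^ 2 * #X} card ⟨∅, by simp⟩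
  simp only [mem_filter, mem_powerset] at hA' hmax
  obtain ⟨hA'A, hA'B⟩ := hA'
  have hcancel : #(A' + (B + B)) * #A ≤ 4 * #(A + B) ^ 2 := by
    refine Nat.le_of_mul_le_mul_right ?_ hA.card_pos
    calc #(A' + (B + B)) * #A * #A = #(A' + (B + B)) * #A ^ 2 := by ring
      _ ≤ 4 * #(A + B) ^ 2 * #A' := hA'B
      _ ≤ 4 * #(A + B) ^ 2 * #A := by gcongr
  refine ⟨A', hA'A, ?_, hcancel⟩
  by_contra! hsmall
  have hcompl : #A ≤ 2 * #(A \ A') := by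
    have := card_sdiff_add_card_eq_card hA'A
    omega
  obtain ⟨X, hXcompl, hX, hXB⟩ :=
    exists_subset_card_add_add_mul_sq_le (D := A \ A') (card_pos.1 (by omega)) B
  have hXA : #(X + (B + B)) * #A ^ 2 ≤ 4 * #(A + B) ^ 2 * #X := by
    calc #(X + (B + B)) * #A ^ 2 ≤ #(X + (B + B)) * (2 * #(A \ A')) ^ 2 := by gcongr
      _ = 4 * (#(X + (B + B)) * #(A \ A') ^ 2) := by ring
      _ ≤ 4 * (#(A \ A' + B) ^ 2 * #X) := by gcongr
      _ ≤ 4 * (#(A + B) ^ 2 * #X) := by gcongr; exact sdiff_subset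
      _ = 4 * #(A + B) ^ 2 * #X := by ring
  have hcard : #(A' ∪ X) = #A' + #X :=
    card_union_of_disjoint (disjoint_sdiff.mono_right hXcompl)
  have hunion : #(A' ∪ X + (B + B)) * #A ^ 2 ≤ 4 * #(A + B) ^ 2 * #(A' ∪ X) := by
    calc #(A' ∪ X + (B + B)) * #A ^ 2 ≤ (#(A' + (B + B)) + #(X + (B + B))) * #A ^ 2 := by
          rw [union_add]
          gcongr
          exact card_union_le _ _
      _ ≤ 4 * #(A + B) ^ 2 * #(A' ∪ X) := by rw [hcard, add_mul, mul_add]; gcongr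
  have := hmax (A' ∪ X) ⟨union_subset hA'A (hXcompl.trans sdiff_subset), hunion⟩
  have := hX.card_pos
  omega

theorem card_add_sub_add_mul_card_pow_three_le (A : Finset G) {B : Finset G} (hB : B.Nonempty) :
    #(A + A - (A + A)) * #B ^ 3 ≤ #(A + B) ^ 4 := by
  have hpluennecke := pluennecke_ruzsa_inequality_nsmul_sub_nsmul_add hB A 2 2
  simp only [two_nsmul] at hpluennecke
  rw [add_comm B A] at hpluennecke
  have hB0 : (#B : ℚ≥0) ≠ 0 := by exact_mod_cast hB.card_ne_zero
  have : (#(A + A - (A + A)) : ℚ≥0) * #B ^ 3 ≤ (#(A + B) : ℚ≥0) ^ 4 := by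
    calc (#(A + A - (A + A)) : ℚ≥0) * #B ^ 3
        ≤ (#(A + B) / #B : ℚ≥0) ^ (2 + 2) * #B * #B ^ 3 := by gcongr
      _ = (#(A + B) : ℚ≥0) ^ 4 := by ring_nf; field_simp
  exact_mod_cast this

end PluenneckePetridis

section Dilates

theorem card_add_smul_mul_le {R M : Type*} [AddCommGroup M] [DistribSMul R M] [DecidableEq M]
    (A W Z : Finset M) {c d : R} {N : ℕ} (hN : N ≤ #(c • A ∩ d • A)) :
    #(W + c • Z) * N ≤ #(W + d • A) * #(A + Z) := by
  calc #(W + c • Z) * N ≤ #(W + c • Z) * #(c • A ∩ d • A) := by gcongr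
    _ ≤ #(W + c • A ∩ d • A) * #(c • A ∩ d • A + c • Z) :=
      ruzsa_triangle_inequality_add_add_add _ _ _
    _ ≤ #(W + d • A) * #(c • A + c • Z) := by
      gcongr
      · exact inter_subset_right
      · exact inter_subset_left
    _ ≤ #(W + d • A) * #(A + Z) := by
      rw [← smul_add]
      exact Nat.mul_le_mul_left _ card_smul_finset_le

theorem card_add_sum_smul_mul_pow_le {ι R M : Type*} [AddCommGroup M] [DistribSMul R M]
    [DecidableEq M] (s : Finset ι) (A W : Finset M) (Z : ι → Finset M) {c d : ι → R} {N : ℕ}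
    (hN : ∀ i ∈ s, N ≤ #(c i • A ∩ d i • A)) :
    #(W + ∑ i ∈ s, c i • Z i) * N ^ #s ≤ #(W + ∑ i ∈ s, d i • A) * ∏ i ∈ s, #(A + Z i) := by
  classical
  induction s using Finset.induction_on generalizing W with
  | empty => simp
  | insert a s ha ih =>
    rw [sum_insert ha, sum_insert ha, prod_insert ha, card_insert_of_notMem ha, ← add_assoc]
    calc #(W + c a • Z a + ∑ i ∈ s, c i • Z i) * N ^ (#s + 1)
        = #(W + c a • Z a + ∑ i ∈ s, c i • Z i) * N ^ #s * N := by ring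
      _ ≤ #(W + c a • Z a + ∑ i ∈ s, d i • A) * (∏ i ∈ s, #(A + Z i)) * N := by
        gcongr ?_ * N
        exact ih _ fun i hi ↦ hN i (mem_insert_of_mem hi)
      _ = #(W + ∑ i ∈ s, d i • A + c a • Z a) * N * ∏ i ∈ s, #(A + Z i) := by
        rw [add_right_comm]; ring
      _ ≤ #(W + ∑ i ∈ s, d i • A + d a • A) * #(A + Z a) * ∏ i ∈ s, #(A + Z i) := by
        gcongr ?_ * _
        exact card_add_smul_mul_le A _ _ (hN a (mem_insert_self a s))
      _ = #(W + (d a • A + ∑ i ∈ s, d i • A)) * (#(A + Z a) * ∏ i ∈ s, #(A + Z i)) := by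
        rw [add_right_comm, ← add_assoc, mul_assoc]

theorem sub_smul_subset {R M : Type*} [Ring R] [AddCommGroup M] [Module R M] [DecidableEq M]
    (a b : R) (s : Finset M) : (a - b) • s ⊆ a • s + -b • s := by
  simp only [subset_iff, mem_smul_finset]
  rintro _ ⟨x, hx, rfl⟩
  rw [sub_eq_add_neg, add_smul]
  exact add_mem_add (smul_mem_smul_finset hx) (smul_mem_smul_finset hx)

end Dilates

section Field

variable {F : Type*} [Field F] [DecidableEq F]

theorem card_sub_smul_add_sub_smul_mul_pow_four_le {A C : Finset F} {b₀ b₁ b₂ b₃ b₄ : F} {N : ℕ}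
    (hN : ∀ b ∈ C, N ≤ #(b • A ∩ b₀ • A))
    (h₁ : b₁ ∈ C) (h₂ : b₂ ∈ C) (h₃ : b₃ ∈ C) (h₄ : b₄ ∈ C) :
    #((b₁ - b₂) • C + (b₃ - b₄) • (C + C)) * N ^ 4 ≤
      #(A + C) ^ 2 * #(A + (C + C)) ^ 2 * #(A + A - (A + A)) := by
  have hneg : ∀ b ∈ C, N ≤ #(-b • A ∩ -b₀ • A) := by
    intro b hb
    convert hN b hb using 1
    rw [← card_neg]
    congr 1
    ext x
    simp
  have hexpand : (b₁ - b₂) • C + (b₃ - b₄) • (C + C) ⊆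
      b₁ • C + -b₂ • C + b₃ • (C + C) + -b₄ • (C + C) := by
    rw [add_assoc (b₁ • C + _)]
    exact add_subset_add (sub_smul_subset b₁ b₂ C) (sub_smul_subset b₃ b₄ (C + C))
  have hdilate : b₀ • A + -b₀ • A + b₀ • A + -b₀ • A = b₀ • (A + A - (A + A)) := by
    rw [add_assoc, add_add_add_comm, neg_smul_finset, ← neg_add, ← smul_add, ← smul_finset_neg,
      ← smul_add, sub_eq_add_neg]
  have hreplace : ∀ i ∈ (univ : Finset (Fin 4)),
      N ≤ #(![b₁, -b₂, b₃, -b₄] i • A ∩ ![b₀, -b₀, b₀, -b₀] i • A) := by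
    intro i _
    fin_cases i
    exacts [hN b₁ h₁, hneg b₂ h₂, hN b₃ h₃, hneg b₄ h₄]
  have hbound := card_add_sum_smul_mul_pow_le univ A 0 ![C, C, C + C, C + C] hreplace
  simp only [Fin.sum_univ_four, Fin.prod_univ_four, card_univ, Fintype.card_fin, zero_add,
    Matrix.cons_val] at hbound
  calc #((b₁ - b₂) • C + (b₃ - b₄) • (C + C)) * N ^ 4
      ≤ #(b₁ • C + -b₂ • C + b₃ • (C + C) + -b₄ • (C + C)) * N ^ 4 := by gcongr
    _ ≤ #(b₀ • A + -b₀ • A + b₀ • A + -b₀ • A) *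
        (#(A + C) * #(A + C) * #(A + (C + C)) * #(A + (C + C))) := hbound
    _ ≤ #(A + A - (A + A)) * (#(A + C) * #(A + C) * #(A + (C + C)) * #(A + (C + C))) := by
      rw [hdilate]
      exact Nat.mul_le_mul_right _ card_smul_finset_le
    _ = #(A + C) ^ 2 * #(A + (C + C)) ^ 2 * #(A + A - (A + A)) := by ring

theorem add_smul_eq_image (B : Finset F) (r : F) :
    B + r • B = (B ×ˢ B).image fun x ↦ x.1 + r * x.2 :=
  image₂_image_right _ _

/-- The difference quotients `(b₁ - b₂) / (b₃ - b₄)` of elements of `B` with `b₃ ≠ b₄`. They are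
the scalars `s` for which `(x, y) ↦ x + s * y` fails to be injective on `B ×ˢ B`. -/
def differenceQuotients (B : Finset F) : Finset F :=
  (B - B) / (B - B).erase 0

theorem mem_differenceQuotients {B : Finset F} {s : F} :
    s ∈ differenceQuotients B ↔
      ∃ b₁ ∈ B, ∃ b₂ ∈ B, ∃ b₃ ∈ B, ∃ b₄ ∈ B, b₃ ≠ b₄ ∧ s * (b₃ - b₄) = b₁ - b₂ := by
  simp only [differenceQuotients, mem_div, mem_sub, mem_erase]
  constructor
  · rintro ⟨_, ⟨b₁, h₁, b₂, h₂, rfl⟩, _, ⟨h0, b₃, h₃, b₄, h₄, rfl⟩, rfl⟩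
    exact ⟨b₁, h₁, b₂, h₂, b₃, h₃, b₄, h₄, sub_ne_zero.1 h0, div_mul_cancel₀ _ h0⟩
  · rintro ⟨b₁, h₁, b₂, h₂, b₃, h₃, b₄, h₄, hne, hs⟩
    have h0 := sub_ne_zero.2 hne
    exact ⟨_, ⟨b₁, h₁, b₂, h₂, rfl⟩, _, ⟨h0, b₃, h₃, b₄, h₄, rfl⟩, (eq_div_iff h0).2 hs |>.symm⟩

theorem zero_mem_differenceQuotients {B : Finset F} (hB : B.Nontrivial) :
    0 ∈ differenceQuotients B := by
  obtain ⟨x, hx, y, hy, hxy⟩ := hB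
  exact mem_differenceQuotients.2 ⟨x, hx, x, hx, x, hx, y, hy, hxy, by simp⟩

theorem card_add_smul_of_notMem_differenceQuotients {B : Finset F} {s : F}
    (hs : s ∉ differenceQuotients B) : #(B + s • B) = #B ^ 2 := by
  rw [add_smul_eq_image, card_image_of_injOn, card_product, sq]
  rintro ⟨x, y⟩ hx ⟨x', y'⟩ hx' h
  simp only [coe_product, Set.mem_prod, mem_coe] at hx hx' h
  have hy : y = y' := by
    by_contra hy
    exact hs (mem_differenceQuotients.2
      ⟨x', hx'.1, x, hx.1, y, hx.2, y', hx'.2, hy, by linear_combination h⟩)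
  subst hy
  rw [add_right_cancel h]

theorem exists_card_sq_le_two_mul_card_add_smul {B R : Finset F} (hR : R.Nonempty)
    (hBR : #B ^ 2 ≤ #R) : ∃ r ∈ R, #B ^ 2 ≤ 2 * #(B + r • B) := by
  simp_rw [add_smul_eq_image]
  rw [sq, ← card_product] at hBR ⊢
  refine exists_card_le_two_mul_card_image hR hBR fun x _ y _ hxy ↦ ?_
  refine card_le_one.2 fun r hr r' hr' ↦ ?_
  simp only [mem_filter] at hr hr'
  have hmul : (r - r') * (x.2 - y.2) = 0 := by linear_combination hr.2 - hr'.2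
  rcases mul_eq_zero.1 hmul with h | h
  · exact sub_eq_zero.1 h
  · have hsnd := sub_eq_zero.1 h
    have hfst := hr.2
    rw [hsnd] at hfst
    exact absurd (Prod.ext (add_right_cancel hfst) hsnd) hxy

-- Starting from `0`, either every translate by `1` stays in the set of difference quotients, which
-- then contains all natural numbers, or some translate leaves it and gives an injective map.
theorem exists_mem_differenceQuotients_card_sq_le_two_mul {B : Finset F} (hB : B.Nontrivial)
    (hcast : Set.InjOn (Nat.cast : ℕ → F) (Set.Iio (#B ^ 2))) :
    ∃ s ∈ differenceQuotients B, #B ^ 2 ≤ 2 * #(B + (s + 1) • B) := by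
  by_cases hstep : ∀ s ∈ differenceQuotients B, s + 1 ∈ differenceQuotients B
  · have hnat (n : ℕ) : (n : F) ∈ differenceQuotients B := by
      induction n with
      | zero => simpa using zero_mem_differenceQuotients hB
      | succ n ih => simpa using hstep _ ih
    let R : Finset F := (range (#B ^ 2)).image fun n : ℕ ↦ (n : F) + 1
    have hR : #R = #B ^ 2 := by
      rw [card_image_of_injOn, card_range]
      intro m hm n hn hmn
      exact hcast (by simpa using hm) (by simpa using hn) (add_right_cancel hmn)
    have hRne : R.Nonempty := card_pos.1 (hR ▸ pow_pos hB.nonempty.card_pos 2)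
    obtain ⟨r, hr, hcard⟩ := exists_card_sq_le_two_mul_card_add_smul hRne hR.ge
    obtain ⟨n, -, rfl⟩ := mem_image.1 hr
    exact ⟨n, hnat n, hcard⟩
  · push Not at hstep
    obtain ⟨s, hs, hs'⟩ := hstep
    refine ⟨s, hs, ?_⟩
    rw [card_add_smul_of_notMem_differenceQuotients hs']
    omega

theorem exists_card_sq_le_two_mul_card_sub_smul_add_sub_smul {B : Finset F} (hB : B.Nonempty)
    (hcast : Set.InjOn (Nat.cast : ℕ → F) (Set.Iio (#B ^ 2))) :
    ∃ b₁ ∈ B, ∃ b₂ ∈ B, ∃ b₃ ∈ B, ∃ b₄ ∈ B,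
      #B ^ 2 ≤ 2 * #((b₁ - b₂) • B + (b₃ - b₄) • (B + B)) := by
  obtain ⟨b, rfl⟩ | hB := hB.exists_eq_singleton_or_nontrivial
  · simp
  obtain ⟨s, hs, hcard⟩ := exists_mem_differenceQuotients_card_sq_le_two_mul hB hcast
  obtain ⟨b₁, h₁, b₂, h₂, b₃, h₃, b₄, h₄, hne, hs⟩ := mem_differenceQuotients.1 hs
  refine ⟨b₁, h₁, b₂, h₂, b₃, h₃, b₄, h₄, hcard.trans ?_⟩
  gcongr 2 * ?_
  rw [← card_smul_finset₀ (sub_ne_zero.2 hne)]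
  refine card_le_card fun z hz ↦ ?_
  simp only [mem_add, mem_smul_finset, smul_eq_mul] at hz ⊢
  obtain ⟨_, ⟨x, hx, _, ⟨y, hy, rfl⟩, rfl⟩, rfl⟩ := hz
  exact ⟨_, ⟨y, hy, rfl⟩, _, ⟨_, ⟨x, hx, y, hy, rfl⟩, rfl⟩, by linear_combination -y * hs⟩

theorem card_sq_mul_pow_four_le {A C : Finset F} {b₀ : F} {N : ℕ}
    (hcast : Set.InjOn (Nat.cast : ℕ → F) (Set.Iio (#C ^ 2)))
    (hN : ∀ b ∈ C, N ≤ #(b • A ∩ b₀ • A)) :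
    #C ^ 2 * N ^ 4 ≤ 2 * (#(A + C) ^ 2 * #(A + (C + C)) ^ 2 * #(A + A - (A + A))) := by
  rcases C.eq_empty_or_nonempty with rfl | hC
  · simp
  obtain ⟨b₁, h₁, b₂, h₂, b₃, h₃, b₄, h₄, hcard⟩ :=
    exists_card_sq_le_two_mul_card_sub_smul_add_sub_smul hC hcast
  calc #C ^ 2 * N ^ 4 ≤ 2 * #((b₁ - b₂) • C + (b₃ - b₄) • (C + C)) * N ^ 4 := by gcongr
    _ = 2 * (#((b₁ - b₂) • C + (b₃ - b₄) • (C + C)) * N ^ 4) := by ring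
    _ ≤ 2 * (#(A + C) ^ 2 * #(A + (C + C)) ^ 2 * #(A + A - (A + A))) :=
      Nat.mul_le_mul_left 2 (card_sub_smul_add_sub_smul_mul_pow_four_le hN h₁ h₂ h₃ h₄)

theorem exists_card_sq_mul_card_le_sum_card_smul_inter_smul (A : Finset F) {B : Finset F}
    (hB : B.Nonempty) (hB0 : 0 ∉ B) :
    ∃ b₀ ∈ B, #A ^ 2 * #B ≤ #(A * B) * ∑ b ∈ B, #(b • A ∩ b₀ • A) := by
  have hsub : ∀ b ∈ B, b • A ⊆ A * B := fun b hb ↦ by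
    rw [mul_comm]
    exact smul_finset_subset_smul hb
  have hsum : ∑ b ∈ B, #(b • A) = #B * #A := by
    rw [← smul_eq_mul, ← sum_const]
    exact sum_congr rfl fun b hb ↦ card_smul_finset₀ (ne_of_mem_of_not_mem hb hB0) A
  have hsecond := sq_sum_card_le_card_mul_sum_card_inter B hsub
  rw [hsum, sum_comm, mul_sum] at hsecond
  refine exists_le_of_sum_le hB ?_
  calc ∑ _b₀ ∈ B, #A ^ 2 * #B = (#B * #A) ^ 2 := by rw [sum_const, smul_eq_mul]; ring
    _ ≤ ∑ b₀ ∈ B, #(A * B) * ∑ b ∈ B, #(b • A ∩ b₀ • A) := hsecond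

theorem exists_card_sq_mul_card_le_one_add_log_mul_card_filter (A : Finset F)
    {B : Finset F} (hB : B.Nonempty) (hB0 : 0 ∉ B) :
    ∃ b₀ : F, ∃ N : ℕ, (#A : ℝ) ^ 2 * #B ≤
      #(A * B) * (1 + Real.log #B) * (N * #{b ∈ B | N ≤ #(b • A ∩ b₀ • A)}) := by
  obtain ⟨b₀, -, hb₀⟩ := exists_card_sq_mul_card_le_sum_card_smul_inter_smul A hB hB0
  obtain ⟨b, -, hb⟩ := exists_sum_le_harmonic_mul hB
    (f := fun b ↦ (#(b • A ∩ b₀ • A) : ℝ)) fun b _ ↦ Nat.cast_nonneg _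
  simp only [Nat.cast_le] at hb
  refine ⟨b₀, #(b • A ∩ b₀ • A), ?_⟩
  set M : ℝ := #(b • A ∩ b₀ • A) * #{b' ∈ B | #(b • A ∩ b₀ • A) ≤ #(b' • A ∩ b₀ • A)}
  calc (#A : ℝ) ^ 2 * #B ≤ #(A * B) * ∑ b ∈ B, (#(b • A ∩ b₀ • A) : ℝ) := by exact_mod_cast hb₀
    _ ≤ #(A * B) * (harmonic #B * M) := by gcongr
    _ ≤ #(A * B) * ((1 + Real.log #B) * M) := by gcongr; exact harmonic_le_one_add_log #B
    _ = #(A * B) * (1 + Real.log #B) * M := by ring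

theorem mul_card_pow_four_mul_le {A A' B C : Finset F} {b₀ : F} {N : ℕ} (hA'A : A' ⊆ A)
    (hA' : #(A' + (B + B)) * #A ≤ 4 * #(A + B) ^ 2) (hB : B.Nonempty) (hCB : C ⊆ B)
    (hcast : Set.InjOn (Nat.cast : ℕ → F) (Set.Iio (#C ^ 2)))
    (hN : ∀ b ∈ C, N ≤ #(b • A' ∩ b₀ • A')) :
    (N * #C) ^ 4 * (#A ^ 2 * #B) ≤ 2 ^ 5 * #(A + B) ^ 10 := by
  have hQ : #(A' + A' - (A' + A')) * #B ^ 3 ≤ #(A + B) ^ 4 :=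
    (card_add_sub_add_mul_card_pow_three_le A' hB).trans (by gcongr)
  refine Nat.le_of_mul_le_mul_right ?_ (pow_pos hB.card_pos 2)
  calc (N * #C) ^ 4 * (#A ^ 2 * #B) * #B ^ 2 = #C ^ 2 * (#C ^ 2 * N ^ 4) * (#A ^ 2 * #B ^ 3) := by
        ring
    _ ≤ #B ^ 2 * (2 * (#(A' + C) ^ 2 * #(A' + (C + C)) ^ 2 * #(A' + A' - (A' + A')))) *
        (#A ^ 2 * #B ^ 3) := by
      gcongr ?_ * ?_ * _
      · exact Nat.pow_le_pow_left (card_le_card hCB) 2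
      · exact card_sq_mul_pow_four_le hcast hN
    _ ≤ #B ^ 2 * (2 * (#(A + B) ^ 2 * #(A' + (B + B)) ^ 2 * #(A' + A' - (A' + A')))) *
        (#A ^ 2 * #B ^ 3) := by gcongr
    _ = 2 * #B ^ 2 * #(A + B) ^ 2 * (#(A' + (B + B)) * #A) ^ 2 *
        (#(A' + A' - (A' + A')) * #B ^ 3) := by ring
    _ ≤ 2 * #B ^ 2 * #(A + B) ^ 2 * (4 * #(A + B) ^ 2) ^ 2 * #(A + B) ^ 4 := by gcongr
    _ = 2 ^ 5 * #(A + B) ^ 10 * #B ^ 2 := by ring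

theorem card_pow_mul_card_pow_le {A B : Finset F} (hB : 2 ≤ #B)
    (hcast : Set.InjOn (Nat.cast : ℕ → F) (Set.Iio (#B ^ 2))) :
    (#A : ℝ) ^ 10 * #B ^ 5 ≤
      2 ^ 17 * (1 + Real.log #B) ^ 4 * #(A + B) ^ 10 * #(A * B) ^ 4 := by
  obtain ⟨A', hA'A, hA', hA'B⟩ := exists_large_subset_card_add_add_mul_le A B
  set B' := B.erase 0
  have hB'B : B' ⊆ B := erase_subset _ _
  have hB' : #B ≤ 2 * #B' := by
    have : #B - 1 ≤ #B' := pred_card_le_card_erase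
    omega
  have hB'pos : 0 < #B' := by omega
  obtain ⟨b₀, N, hpopular⟩ := exists_card_sq_mul_card_le_one_add_log_mul_card_filter A'
    (card_pos.1 hB'pos) (notMem_erase 0 B)
  set C := {b ∈ B' | N ≤ #(b • A' ∩ b₀ • A')}
  have hCB : C ⊆ B := (filter_subset _ _).trans hB'B
  set L := 1 + Real.log #B
  have hL : 0 ≤ L := by positivity
  have hB'L : 1 + Real.log #B' ≤ L := by
    simp only [L]
    gcongr
  have hlower : (#A : ℝ) ^ 2 * #B ≤ 2 ^ 3 * (#(A * B) * L * (N * #C)) := by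
    calc (#A : ℝ) ^ 2 * #B ≤ (2 * (#A' : ℝ)) ^ 2 * (2 * (#B' : ℝ)) := by
          gcongr <;> assumption_mod_cast
      _ = 2 ^ 3 * ((#A' : ℝ) ^ 2 * #B') := by ring
      _ ≤ 2 ^ 3 * (#(A' * B') * (1 + Real.log #B') * (N * #C)) := by gcongr
      _ ≤ 2 ^ 3 * (#(A * B) * L * (N * #C)) := by gcongr
  have hupper : ((N * #C : ℝ)) ^ 4 * (#A ^ 2 * #B) ≤ 2 ^ 5 * #(A + B) ^ 10 := by
    have hcastC := hcast.mono (Set.Iio_subset_Iio (Nat.pow_le_pow_left (card_le_card hCB) 2))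
    exact_mod_cast mul_card_pow_four_mul_le hA'A hA'B (card_pos.1 (by omega)) hCB hcastC
      fun b hb ↦ (mem_filter.1 hb).2
  calc (#A : ℝ) ^ 10 * #B ^ 5 = (#A ^ 2 * #B) ^ 4 * (#A ^ 2 * #B) := by ring
    _ ≤ (2 ^ 3 * (#(A * B) * L * (N * #C))) ^ 4 * (#A ^ 2 * #B) := by gcongr
    _ = 2 ^ 12 * #(A * B) ^ 4 * L ^ 4 * ((N * #C) ^ 4 * (#A ^ 2 * #B)) := by ring
    _ ≤ 2 ^ 12 * #(A * B) ^ 4 * L ^ 4 * (2 ^ 5 * #(A + B) ^ 10) := by gcongr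
    _ = 2 ^ 17 * L ^ 4 * #(A + B) ^ 10 * #(A * B) ^ 4 := by ring

-- `hcast` says that the characteristic of `F` is zero or at least `#B ^ 2`.
theorem different_sets_key_general {A B : Finset F} (hB : 2 ≤ #B)
    (hcast : Set.InjOn (Nat.cast : ℕ → F) (Set.Iio (#B ^ 2))) :
    (2 ^ 17 * 3 ^ 4)⁻¹ * Real.log #B ^ (-4 : ℝ) * (#A : ℝ) ^ 10 * (#B : ℝ) ^ 5 ≤
      (#(A + B) : ℝ) ^ 10 * (#(A * B) : ℝ) ^ 4 := by
  have hlog : 1 / 2 < Real.log #B :=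
    calc (1 / 2 : ℝ) < Real.log 2 := by linarith [Real.log_two_gt_d9]
      _ ≤ Real.log #B := Real.log_le_log (by norm_num) (by exact_mod_cast hB)
  have hrpow : Real.log #B ^ (-4 : ℝ) = (Real.log #B ^ 4)⁻¹ := by
    rw [Real.rpow_neg (by linarith)]
    norm_cast
  calc (2 ^ 17 * 3 ^ 4)⁻¹ * Real.log #B ^ (-4 : ℝ) * (#A : ℝ) ^ 10 * (#B : ℝ) ^ 5
      = (#A : ℝ) ^ 10 * #B ^ 5 / (2 ^ 17 * (3 * Real.log #B) ^ 4) := by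
        rw [hrpow]; field_simp
    _ ≤ (#(A + B) : ℝ) ^ 10 * #(A * B) ^ 4 := by
      rw [div_le_iff₀' (by positivity), ← mul_assoc]
      refine (card_pow_mul_card_pow_le hB hcast).trans ?_
      gcongr
      linarith

end Field

theorem different_sets_key :
    ∃ c α : ℝ, 0 < c ∧ 0 ≤ α ∧ ∀ (p : ℕ), p.Prime → ∀ A B : Finset (ZMod p),
      2 ≤ B.card → B.card ≤ A.card → (A.card : ℝ) ≤ Real.sqrt p →
      c * (Real.log (B.card : ℝ)) ^ (-α) * (A.card : ℝ) ^ 6 * (B.card : ℝ) ^ 9 ≤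
        ((A + B).card : ℝ) ^ 10 * ((A * B).card : ℝ) ^ 4 := by
  refine ⟨(2 ^ 17 * 3 ^ 4)⁻¹, 4, by norm_num, by norm_num, fun p hp A B hB hBA hA ↦ ?_⟩
  have : Fact p.Prime := ⟨hp⟩
  have hBp : #B ^ 2 ≤ p := by
    have hBsqrt : (#B : ℝ) ≤ Real.sqrt p := le_trans (by exact_mod_cast hBA) hA
    exact_mod_cast (Real.le_sqrt (Nat.cast_nonneg _) (Nat.cast_nonneg _)).1 hBsqrt
  set c := (2 ^ 17 * 3 ^ 4)⁻¹ * Real.log #B ^ (-4 : ℝ)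
  calc c * (#A : ℝ) ^ 6 * (#B : ℝ) ^ 9 = c * (#A : ℝ) ^ 6 * (#B : ℝ) ^ 5 * (#B : ℝ) ^ 4 := by ring
    _ ≤ c * (#A : ℝ) ^ 6 * (#B : ℝ) ^ 5 * (#A : ℝ) ^ 4 := by gcongr
    _ = c * (#A : ℝ) ^ 10 * (#B : ℝ) ^ 5 := by ring
    _ ≤ (#(A + B) : ℝ) ^ 10 * (#(A * B) : ℝ) ^ 4 :=
      different_sets_key_general hB
        ((CharP.natCast_injOn_Iio (ZMod p) p).mono (Set.Iio_subset_Iio hBp))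
end

section
/- There exist absolute constants c > 0 and α ≥ 0 such that for all finite A, B ⊆ F_p with |A| ≥ |B| ≥ p^{1/2}, one has max{|A+B|/|A|, |AB|/|A|} ≥ c(log|A|)^{−α}·min{ (|B|⁷/(|A|⁵p^{1/2}))^{1/14}, (|B|³p/|A|⁴)^{1/12} }. -/
open Finset Pointwise

/-!
Let `A + B` and `A * B` be not much larger than `A`. Since `#(A * B)` is small, the multiplicative
energy of `A` and `B` is large, so there are `b₀` and `B₁ ⊆ B` such that `b • A ∩ b₀ • A` is large
for every `b ∈ B₁`. As `A + B` is small too, a greedy covering argument covers every dilate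
`b • B₁` by few translates of `-(b₀ • A)`, at the cost of a logarithm. For `r = (x - y) / (z - w)`
in the quotient set of `B₁`, the set `B₁ + r • B₁` embeds, after multiplying by `z - w`, into
`z • B₁ - w • B₁ + (x • B₁ - y • B₁)`, hence into few translates of a dilate of `2 • A - 2 • A`,
which is small by the Plünnecke-Ruzsa inequality.

On the other hand, `B₁ + r • B₁` is large for some such `r`. If the quotient set is all of `ZMod p`,
a second moment argument over `r` gives `r` with `#(B₁ + r • B₁)` comparable to `min p (#B₁ ^ 2)`.
Otherwise it is not closed under adding `1`: there is an `r` in it with `r + 1` outside of it, so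
`(u, v) ↦ u + (r + 1) * v` is injective on `B₁ ×ˢ B₁`, and since `B₁ + (r + 1) • B₁` lies in
`B₁ + B₁ + r • B₁`, Plünnecke's inequality bounds `#B₁ ^ 3` by `#(B₁ + B₁) * #(B₁ + r • B₁)` up to
a constant.
-/

section Covering

theorem harmonic_add_sub_div_le {n m : ℕ} (h : n ≤ m) :
    harmonic n + (m - n : ℚ) / m ≤ harmonic m := by
  have htail : (m - n : ℚ) / m ≤ ∑ i ∈ Ico n m, ((i + 1 : ℕ) : ℚ)⁻¹ := by
    rw [div_eq_mul_inv, ← Nat.cast_sub h, ← Nat.card_Ico, ← nsmul_eq_mul]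
    refine card_nsmul_le_sum _ _ _ fun i hi ↦ ?_
    gcongr
    exact (mem_Ico.1 hi).2
  rw [harmonic, harmonic, ← sum_range_add_sum_Ico _ h]
  exact add_le_add_right htail _

variable {ι α : Type*}

theorem exists_card_mul_le_card_mul_card_filter {S : Finset ι} {X : Finset α} (r : ι → α → Prop)
    [∀ t x, Decidable (r t x)] {d : ℕ} (hS : S.Nonempty) (hd : ∀ x ∈ X, d ≤ #{t ∈ S | r t x}) :
    ∃ t ∈ S, #X * d ≤ #S * #{x ∈ X | r t x} := by
  obtain ⟨t, ht, hmax⟩ := exists_max_image S (fun t ↦ #{x ∈ X | r t x}) hS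
  exact ⟨t, ht, card_mul_le_card_mul (Function.swap r) hd hmax⟩

-- Greedy choice: each new `t` covers at least the fraction `d / #S` of what is still uncovered.
theorem exists_cover_card_mul_le_harmonic (S : Finset ι) (X : Finset α) (r : ι → α → Prop)
    [∀ t x, Decidable (r t x)] {d : ℕ} (hd₀ : 0 < d) (hd : ∀ x ∈ X, d ≤ #{t ∈ S | r t x}) :
    ∃ T ⊆ S, (∀ x ∈ X, ∃ t ∈ T, r t x) ∧ (#T : ℚ) * d ≤ #S * harmonic #X := by
  classical
  induction X using Finset.strongInduction with
  | H X ih =>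
  obtain rfl | hX := X.eq_empty_or_nonempty
  · exact ⟨∅, by simp⟩
  obtain ⟨x₀, hx₀⟩ := id hX
  have hS : S.Nonempty := card_pos.1 (hd₀.trans_le ((hd x₀ hx₀).trans (card_filter_le _ _)))
  obtain ⟨t, htS, ht⟩ := exists_card_mul_le_card_mul_card_filter r hS hd
  set K := {x ∈ X | r t x}
  set U := {x ∈ X | ¬r t x}
  have hK₀ : K.Nonempty :=
    card_pos.1 (Nat.pos_of_mul_pos_left ((Nat.mul_pos hX.card_pos hd₀).trans_le ht))
  have hUX : U ⊂ X :=
    let ⟨x, hx⟩ := hK₀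
    filter_ssubset.2 ⟨x, (mem_filter.1 hx).1, not_not.2 (mem_filter.1 hx).2⟩
  have hfraction : (d : ℚ) ≤ #S * ((#X - #U) / #X) := by
    have hK : (#X - #U : ℚ) = #K := by
      rw [sub_eq_iff_eq_add, ← card_filter_add_card_filter_not (s := X) (r t), Nat.cast_add]
    rw [hK, mul_div_assoc', le_div_iff₀ (Nat.cast_pos.2 hX.card_pos), mul_comm]
    exact_mod_cast ht
  obtain ⟨T, hTS, hT, hTcard⟩ := ih U hUX fun x hx ↦ hd x (hUX.subset hx)
  refine ⟨insert t T, insert_subset htS hTS, fun x hx ↦ ?_, ?_⟩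
  · by_cases hxt : r t x
    · exact ⟨t, mem_insert_self t T, hxt⟩
    · obtain ⟨s, hs, hsx⟩ := hT x (mem_filter.2 ⟨hx, hxt⟩)
      exact ⟨s, mem_insert_of_mem hs, hsx⟩
  · calc (#(insert t T) : ℚ) * d ≤ (#T + 1) * d := by
          gcongr
          exact_mod_cast card_insert_le t T
      _ = #T * d + d := by ring
      _ ≤ #S * harmonic #U + #S * ((#X - #U) / #X) := add_le_add hTcard hfraction
      _ = #S * (harmonic #U + (#X - #U) / #X) := by ring
      _ ≤ #S * harmonic #X := by
          gcongr
          exact harmonic_add_sub_div_le (card_le_card hUX.subset)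

theorem exists_subset_sub_card_mul_le {G : Type*} [AddGroup G] [DecidableEq G] (X : Finset G)
    {Y : Finset G} (hY : Y.Nonempty) :
    ∃ T : Finset G, X ⊆ T - Y ∧ (#T : ℝ) * #Y ≤ #(X + Y) * (1 + Real.log #X) := by
  have hdeg : ∀ x ∈ X, #Y ≤ #{t ∈ X + Y | -x + t ∈ Y} := fun x hx ↦
    card_le_card_of_injOn (x + ·)
      (fun y hy ↦ by simpa using ⟨add_mem_add hx hy, hy⟩) (add_right_injective x).injOn
  obtain ⟨T, -, hT, hTcard⟩ :=
    exists_cover_card_mul_le_harmonic (X + Y) X (fun t x ↦ -x + t ∈ Y) hY.card_pos hdeg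
  refine ⟨T, fun x hx ↦ ?_, ?_⟩
  · obtain ⟨t, ht, hty⟩ := hT x hx
    exact mem_sub.2 ⟨t, ht, -x + t, hty, by
      rw [sub_eq_add_neg, neg_add_rev, neg_neg, add_neg_cancel_left]⟩
  · calc (#T : ℝ) * #Y ≤ #(X + Y) * harmonic #X := by exact_mod_cast hTcard
      _ ≤ #(X + Y) * (1 + Real.log #X) := by
          gcongr
          exact harmonic_le_one_add_log _

end Covering

section Pigeonhole

variable {ι α β : Type*}

theorem sum_eq_sum_card_filter_le {s : Finset ι} {f : ι → ℕ} {M : ℕ} (hf : ∀ i ∈ s, f i ≤ M) :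
    ∑ i ∈ s, f i = ∑ n ∈ Icc 1 M, #{i ∈ s | n ≤ f i} := by
  refine Eq.trans (sum_congr rfl fun i hi ↦ ?_)
    (sum_card_bipartiteAbove_eq_sum_card_bipartiteBelow fun i n ↦ n ≤ f i)
  have hIcc : bipartiteAbove (fun i n ↦ n ≤ f i) (Icc 1 M) i = Icc 1 (f i) := by
    ext n
    have := hf i hi
    simp only [mem_bipartiteAbove, mem_Icc]
    omega
  rw [hIcc, Nat.card_Icc, Nat.add_sub_cancel]

theorem exists_sum_le_mul_card_filter_mul_log (s : Finset ι) {f : ι → ℕ} {M : ℕ}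
    (hf : ∀ i ∈ s, f i ≤ M) :
    ∃ n, 1 ≤ n ∧ ∑ i ∈ s, (f i : ℝ) ≤ n * #{i ∈ s | n ≤ f i} * (1 + Real.log M) := by
  obtain rfl | hM := M.eq_zero_or_pos
  · have hzero : ∑ i ∈ s, (f i : ℝ) = 0 :=
      sum_eq_zero fun i hi ↦ Nat.cast_eq_zero.2 (Nat.le_zero.1 (hf i hi))
    exact ⟨1, le_rfl, by simp [hzero]⟩
  set F := ∑ i ∈ s, (f i : ℝ)
  have hF₀ : 0 ≤ F := sum_nonneg fun i _ ↦ Nat.cast_nonneg _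
  have hharmonic : ∑ n ∈ Icc 1 M, (n : ℝ)⁻¹ ≤ 1 + Real.log M := by
    simpa [harmonic_eq_sum_Icc] using harmonic_le_one_add_log M
  obtain ⟨n, hn, hle⟩ := exists_le_of_sum_le (s := Icc 1 M) ⟨1, mem_Icc.2 ⟨le_rfl, hM⟩⟩
    (f := fun n : ℕ ↦ F * (n : ℝ)⁻¹) (g := fun n ↦ #{i ∈ s | n ≤ f i} * (1 + Real.log M)) <| by
      rw [← mul_sum, ← sum_mul, ← Nat.cast_sum, ← sum_eq_sum_card_filter_le hf, Nat.cast_sum]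
      exact mul_le_mul_of_nonneg_left hharmonic hF₀
  have hn₁ : 1 ≤ n := (mem_Icc.1 hn).1
  refine ⟨n, hn₁, ?_⟩
  rwa [mul_inv_le_iff₀ (by exact_mod_cast hn₁), mul_comm, ← mul_assoc] at hle

theorem card_sq_le_card_image_mul_card_collisions [DecidableEq β] (S : Finset α) (f : α → β) :
    #S ^ 2 ≤ #(S.image f) * #{x ∈ S ×ˢ S | f x.1 = f x.2} := by
  have hfibers : #{x ∈ S ×ˢ S | f x.1 = f x.2} = ∑ c ∈ S.image f, #{x ∈ S | f x = c} ^ 2 := by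
    rw [card_eq_sum_card_fiberwise (f := fun x ↦ f x.1) (t := S.image f) fun x hx ↦
      mem_image_of_mem f (mem_product.1 (mem_filter.1 hx).1).1]
    refine sum_congr rfl fun c _ ↦ ?_
    rw [sq, ← card_product, ← filter_product, filter_filter]
    congr 1
    ext x
    grind
  rw [card_eq_sum_card_image f S, hfibers]
  exact sq_sum_le_card_mul_sum_sq

-- Averaging over `R`, the number of colliding pairs of `g r` is at most `#S + #S ^ 2 / #R`.
theorem exists_card_mul_card_le_card_image_mul [DecidableEq β] {R : Finset ι}
    (hR : R.Nonempty) (S : Finset α) (g : ι → α → β)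
    (hg : ∀ x ∈ S, ∀ y ∈ S, x ≠ y → #{r ∈ R | g r x = g r y} ≤ 1) :
    ∃ r ∈ R, #R * #S ≤ #(S.image (g r)) * (#R + #S) := by
  classical
  obtain rfl | hS := S.eq_empty_or_nonempty
  · exact ⟨hR.choose, hR.choose_spec, by simp⟩
  have hpair : ∀ x ∈ S ×ˢ S, #{r ∈ R | g r x.1 = g r x.2} ≤ (if x.1 = x.2 then #R else 0) + 1 := by
    intro x hx
    split_ifs with h
    · exact (card_filter_le _ _).trans (Nat.le_succ _)
    · exact (hg _ (mem_product.1 hx).1 _ (mem_product.1 hx).2 h).trans_eq (zero_add 1).symm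
  have hsum : ∑ r ∈ R, #{x ∈ S ×ˢ S | g r x.1 = g r x.2} ≤ #S * #R + #S ^ 2 := by
    calc _ = ∑ x ∈ S ×ˢ S, #{r ∈ R | g r x.1 = g r x.2} :=
          sum_card_bipartiteAbove_eq_sum_card_bipartiteBelow fun r (x : α × α) ↦
            g r x.1 = g r x.2
      _ ≤ ∑ x ∈ S ×ˢ S, ((if x.1 = x.2 then #R else 0) + 1) := sum_le_sum hpair
      _ = #S * #R + #S ^ 2 := by
          rw [sum_add_distrib, sum_product, ← card_eq_sum_ones, card_product, sq]
          simp only [sum_ite_eq, sum_ite_mem, inter_self, sum_const, smul_eq_mul]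
  obtain ⟨r, hr, hle⟩ := exists_le_of_sum_le hR
    (f := fun r ↦ #R * #{x ∈ S ×ˢ S | g r x.1 = g r x.2}) (g := fun _ ↦ #S * #R + #S ^ 2) <| by
      rw [← mul_sum, sum_const, smul_eq_mul]
      exact Nat.mul_le_mul_left _ hsum
  refine ⟨r, hr, Nat.le_of_mul_le_mul_right ?_ hS.card_pos⟩
  calc #R * #S * #S = #R * #S ^ 2 := by ring
    _ ≤ #R * (#(S.image (g r)) * #{x ∈ S ×ˢ S | g r x.1 = g r x.2}) :=
        Nat.mul_le_mul_left _ (card_sq_le_card_image_mul_card_collisions S (g r))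
    _ = #(S.image (g r)) * (#R * #{x ∈ S ×ˢ S | g r x.1 = g r x.2}) := by ring
    _ ≤ #(S.image (g r)) * (#S * #R + #S ^ 2) := Nat.mul_le_mul_left _ hle
    _ = #(S.image (g r)) * (#R + #S) * #S := by ring

end Pigeonhole


section Pluennecke

variable {G : Type*} [AddCommGroup G] [DecidableEq G]

theorem card_add_self_mul_card_le (A B : Finset G) : #(B + B) * #A ≤ #(A + B) ^ 2 := by
  have h := ruzsa_triangle_inequality_add_add_add B A B
  rwa [add_comm B A, ← sq] at h

theorem card_two_nsmul_sub_two_nsmul_mul_card_pow_le (A : Finset G) {B : Finset G}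
    (hB : B.Nonempty) : #(2 • A - 2 • A) * #B ^ 3 ≤ #(A + B) ^ 4 := by
  have hB₀ : (#B : ℚ≥0) ≠ 0 := Nat.cast_ne_zero.2 hB.card_ne_zero
  have hpr := pluennecke_ruzsa_inequality_nsmul_sub_nsmul_add hB A 2 2
  have h : (#(2 • A - 2 • A) : ℚ≥0) * #B ^ 3 ≤ #(A + B) ^ 4 := by
    calc _ ≤ (#(B + A) / #B : ℚ≥0) ^ (2 + 2) * #B * (#B : ℚ≥0) ^ 3 := by gcongr
      _ = (#(B + A) / #B * #B) ^ 4 := by ring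
      _ = #(A + B) ^ 4 := by rw [div_mul_cancel₀ _ hB₀, add_comm B A]
  exact_mod_cast h

theorem exists_subset_card_mul_card_le_card_add_mul {X : Finset G} (hX : X.Nonempty)
    (Y : Finset G) :
    ∃ Z ⊆ X, Z.Nonempty ∧ ∀ U ⊆ X, #(Z + Y) * #U ≤ #(U + Y) * #Z := by
  obtain ⟨Z, hZ, hmin⟩ := exists_min_image (X.powerset.erase ∅)
    (fun U ↦ (#(U + Y) : ℚ) / #U) ⟨X, by simp [hX.ne_empty]⟩
  rw [mem_erase, mem_powerset, ← nonempty_iff_ne_empty] at hZ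
  refine ⟨Z, hZ.2, hZ.1, fun U hU ↦ ?_⟩
  obtain rfl | hU₀ := U.eq_empty_or_nonempty
  · simp
  have hle := hmin U (by simp [hU₀.ne_empty, hU])
  rw [div_le_div_iff₀ (Nat.cast_pos.2 hZ.1.card_pos) (Nat.cast_pos.2 hU₀.card_pos)] at hle
  exact_mod_cast hle

theorem exists_subset_card_add_add_self_mul_le {X : Finset G} (hX : X.Nonempty) (Y : Finset G) :
    ∃ Z ⊆ X, Z.Nonempty ∧ #(Z + Y + Y) * #X ^ 2 ≤ #(X + Y) ^ 2 * #Z := by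
  obtain ⟨Z, hZX, hZ, hmin⟩ := exists_subset_card_mul_card_le_card_add_mul hX Y
  have hpetridis := pluennecke_petridis_inequality_add Y fun U hU ↦ hmin U (hU.trans hZX)
  rw [add_comm Y Z] at hpetridis
  refine ⟨Z, hZX, hZ, Nat.le_of_mul_le_mul_right ?_ hZ.card_pos⟩
  calc #(Z + Y + Y) * #X ^ 2 * #Z = #(Z + Y + Y) * #Z * #X ^ 2 := by ring
    _ ≤ #(Z + Y) * #(Z + Y) * #X ^ 2 := Nat.mul_le_mul_right _ hpetridis
    _ = (#(Z + Y) * #X) ^ 2 := by ring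
    _ ≤ (#(X + Y) * #Z) ^ 2 := Nat.pow_le_pow_left (hmin X Subset.rfl) 2
    _ = #(X + Y) ^ 2 * #Z * #Z := by ring

section Thickening

variable {H₁ H₂ : Type*} [AddGroup H₁] [AddGroup H₂] [Fintype H₁] [Fintype H₂] [DecidableEq H₁]
  [DecidableEq H₂]

variable (H₁ H₂) in
/-- The union of `Y₁` thickened by `H₁` and `Y₂` thickened by `H₂`, inside `G × H₁ × H₂`. Adding it
to itself produces `Y₁ + Y₂` thickened by all of `H₁ × H₂`, which reduces a Plünnecke inequality for
two different summands to one for equal summands; the sizes of `H₁` and `H₂` balance the two parts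
of the union. -/
def thickening (Y₁ Y₂ : Finset G) : Finset (G × H₁ × H₂) :=
  Y₁ ×ˢ univ ×ˢ {0} ∪ Y₂ ×ˢ {0} ×ˢ univ

theorem card_product_zero_add_thickening_le (X Y₁ Y₂ : Finset G) :
    #(X ×ˢ {0} + thickening H₁ H₂ Y₁ Y₂) ≤
      #(X + Y₁) * Fintype.card H₁ + #(X + Y₂) * Fintype.card H₂ := by
  have hsplit : X ×ˢ {0} + thickening H₁ H₂ Y₁ Y₂ =
      (X + Y₁) ×ˢ univ ×ˢ {0} ∪ (X + Y₂) ×ˢ {0} ×ˢ univ := by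
    rw [thickening, add_union, product_add_product_comm, product_add_product_comm,
      singleton_zero, zero_add, zero_add]
  rw [hsplit]
  refine (card_union_le _ _).trans_eq ?_
  simp only [card_product, card_univ, card_singleton, mul_one, one_mul]

theorem card_add_add_mul_le_card_thickening (Z Y₁ Y₂ : Finset G) :
    #(Z + Y₁ + Y₂) * (Fintype.card H₁ * Fintype.card H₂) ≤
      #(Z ×ˢ {0} + thickening H₁ H₂ Y₁ Y₂ + thickening H₁ H₂ Y₁ Y₂) := by
  have hsplit : (Z + Y₁ + Y₂) ×ˢ (univ : Finset H₁) ×ˢ (univ : Finset H₂) =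
      Z ×ˢ {0} + Y₁ ×ˢ univ ×ˢ {0} + Y₂ ×ˢ {0} ×ˢ univ := by
    simp only [product_add_product_comm, singleton_zero, zero_add, add_zero]
  have hsub : (Z + Y₁ + Y₂) ×ˢ (univ : Finset H₁) ×ˢ (univ : Finset H₂) ⊆
      Z ×ˢ {0} + thickening H₁ H₂ Y₁ Y₂ + thickening H₁ H₂ Y₁ Y₂ :=
    hsplit ▸ add_subset_add (add_subset_add_left subset_union_left) subset_union_right
  simpa only [card_product, card_univ] using card_le_card hsub

end Thickening

theorem exists_subset_card_add_add_mul_le {X : Finset G} (hX : X.Nonempty) (Y₁ Y₂ : Finset G) :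
    ∃ Z ⊆ X, Z.Nonempty ∧ #(Z + Y₁ + Y₂) * #X ^ 2 ≤ 4 * #(X + Y₁) * #(X + Y₂) * #Z := by
  obtain rfl | hY₁ := Y₁.eq_empty_or_nonempty
  · exact ⟨X, Subset.rfl, hX, by simp⟩
  obtain rfl | hY₂ := Y₂.eq_empty_or_nonempty
  · exact ⟨X, Subset.rfl, hX, by simp⟩
  set m₁ := #(X + Y₁)
  set m₂ := #(X + Y₂)
  have : NeZero m₁ := ⟨(hX.add hY₁).card_ne_zero⟩
  have : NeZero m₂ := ⟨(hX.add hY₂).card_ne_zero⟩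
  let W := thickening (ZMod m₂) (ZMod m₁) Y₁ Y₂
  obtain ⟨Z', hZ'X, hZ', hcard⟩ :=
    exists_subset_card_add_add_self_mul_le (hX.product (singleton_nonempty 0)) W
  obtain ⟨Z, hZX, rfl⟩ : ∃ Z ⊆ X, Z' = Z ×ˢ {0} := by
    rw [product_singleton, subset_map_iff] at hZ'X
    simpa only [product_singleton] using hZ'X
  have hupper : #(X ×ˢ {0} + W) ≤ 2 * m₁ * m₂ := by
    refine (card_product_zero_add_thickening_le X Y₁ Y₂).trans_eq ?_
    rw [ZMod.card, ZMod.card]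
    ring
  have hlower : #(Z + Y₁ + Y₂) * (m₁ * m₂) ≤ #(Z ×ˢ {0} + W + W) := by
    simpa only [ZMod.card, mul_comm m₂] using
      card_add_add_mul_le_card_thickening (H₁ := ZMod m₂) (H₂ := ZMod m₁) Z Y₁ Y₂
  simp only [card_product, card_singleton, mul_one] at hcard
  refine ⟨Z, hZX, hZ'.fst, Nat.le_of_mul_le_mul_right ?_
    (Nat.mul_pos (NeZero.pos m₁) (NeZero.pos m₂))⟩
  calc #(Z + Y₁ + Y₂) * #X ^ 2 * (m₁ * m₂) = #(Z + Y₁ + Y₂) * (m₁ * m₂) * #X ^ 2 := by ring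
    _ ≤ #(Z ×ˢ {0} + W + W) * #X ^ 2 := Nat.mul_le_mul_right _ hlower
    _ ≤ #(X ×ˢ {0} + W) ^ 2 * #Z := hcard
    _ ≤ (2 * m₁ * m₂) ^ 2 * #Z := by gcongr
    _ = 4 * m₁ * m₂ * #Z * (m₁ * m₂) := by ring

theorem card_sub_add_sub_le_of_subset_sub {X₁ X₂ X₃ X₄ T₁ T₂ T₃ T₄ Y : Finset G}
    (h₁ : X₁ ⊆ T₁ - Y) (h₂ : X₂ ⊆ T₂ - Y) (h₃ : X₃ ⊆ T₃ - Y) (h₄ : X₄ ⊆ T₄ - Y) :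
    #(X₁ - X₂ + (X₃ - X₄)) ≤ #T₁ * #T₂ * (#T₃ * #T₄) * #(2 • Y - 2 • Y) := by
  have hregroup : T₁ - Y - (T₂ - Y) + (T₃ - Y - (T₄ - Y)) =
      T₁ - T₂ + (T₃ - T₄) - (2 • Y - 2 • Y) := by
    rw [sub_sub_sub_comm, sub_sub_sub_comm T₃, sub_add_sub_comm (T₁ - T₂), sub_add_sub_comm Y,
      two_nsmul]
  have hsub : X₁ - X₂ + (X₃ - X₄) ⊆ T₁ - T₂ + (T₃ - T₄) - (2 • Y - 2 • Y) := by
    rw [← hregroup]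
    exact add_subset_add (sub_subset_sub h₁ h₂) (sub_subset_sub h₃ h₄)
  calc #(X₁ - X₂ + (X₃ - X₄)) ≤ #(T₁ - T₂ + (T₃ - T₄)) * #(2 • Y - 2 • Y) :=
        (card_le_card hsub).trans card_sub_le
    _ ≤ #T₁ * #T₂ * (#T₃ * #T₄) * #(2 • Y - 2 • Y) :=
        Nat.mul_le_mul_right _ (card_add_le.trans (Nat.mul_le_mul card_sub_le card_sub_le))

end Pluennecke

section PopularDilates

variable {G₀ : Type*} [GroupWithZero G₀] [DecidableEq G₀]

theorem mulEnergy_eq_sum_card_smul_inter {B : Finset G₀} (hB : 0 ∉ B) (A : Finset G₀) :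
    mulEnergy B A = ∑ b₀ ∈ B, ∑ b ∈ B, #(b • A ∩ b₀ • A) := by
  rw [mulEnergy, card_filter, sum_product, sum_product]
  refine sum_congr rfl fun b₀ hb₀ ↦ sum_congr rfl fun b hb ↦ ?_
  have hb₀' : b₀ ≠ 0 := ne_of_mem_of_not_mem hb₀ hB
  have hb' : b ≠ 0 := ne_of_mem_of_not_mem hb hB
  rw [← card_filter]
  refine card_nbij (fun a ↦ b₀ * a.1) (fun a ha ↦ ?_) (fun a ha a' ha' h ↦ ?_) fun x hx ↦ ?_
  · obtain ⟨haA, hab⟩ := mem_filter.1 ha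
    rw [mem_product] at haA
    exact mem_inter.2 ⟨mem_smul_finset.2 ⟨a.2, haA.2, hab.symm⟩, smul_mem_smul_finset haA.1⟩
  · have hfst : a.1 = a'.1 := mul_left_cancel₀ hb₀' h
    refine Prod.ext hfst (mul_left_cancel₀ hb' ?_)
    rw [← (mem_filter.1 ha).2, ← (mem_filter.1 ha').2, hfst]
  · obtain ⟨hxb, hxb₀⟩ := mem_inter.1 hx
    obtain ⟨a, ha, rfl⟩ := mem_smul_finset.1 hxb
    obtain ⟨a₀, ha₀, h⟩ := mem_smul_finset.1 hxb₀
    exact ⟨(a₀, a), mem_filter.2 ⟨mk_mem_product ha₀ ha, h⟩, h⟩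

theorem exists_card_sq_mul_card_le_card_mul_mul_sum {B : Finset G₀} (hB : B.Nonempty)
    (hB₀ : 0 ∉ B) (A : Finset G₀) :
    ∃ b₀ ∈ B, #A ^ 2 * #B ≤ #(B * A) * ∑ b ∈ B, #(b • A ∩ b₀ • A) := by
  have henergy := le_card_mul_mul_mulEnergy B A
  rw [mulEnergy_eq_sum_card_smul_inter hB₀ A, mul_sum] at henergy
  refine exists_le_of_sum_le hB ?_
  rw [sum_const, smul_eq_mul]
  exact le_of_eq_of_le (by ring) henergy

theorem exists_popular_dilates {A B : Finset G₀} (hA : A.Nonempty) (hB : B.Nonempty)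
    (hB₀ : 0 ∉ B) :
    ∃ N : ℕ, 1 ≤ N ∧ ∃ b₀ : G₀, ∃ B₁ ⊆ B, B₁.Nonempty ∧ (∀ b ∈ B₁, N ≤ #(b • A ∩ b₀ • A)) ∧
      (#A : ℝ) ^ 2 * #B ≤ #(B * A) * (N * #B₁ * (1 + Real.log #A)) := by
  obtain ⟨b₀, -, henergy⟩ := exists_card_sq_mul_card_le_card_mul_mul_sum hB hB₀ A
  obtain ⟨N, hN, hlevel⟩ := exists_sum_le_mul_card_filter_mul_log B
    (f := fun b ↦ #(b • A ∩ b₀ • A)) (M := #A)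
    fun b _ ↦ (card_le_card inter_subset_left).trans card_smul_finset_le
  set B₁ := {b ∈ B | N ≤ #(b • A ∩ b₀ • A)}
  have hmain : (#A : ℝ) ^ 2 * #B ≤ #(B * A) * (N * #B₁ * (1 + Real.log #A)) := by
    calc (#A : ℝ) ^ 2 * #B ≤ #(B * A) * ∑ b ∈ B, (#(b • A ∩ b₀ • A) : ℝ) := by
          exact_mod_cast henergy
      _ ≤ #(B * A) * (N * #B₁ * (1 + Real.log #A)) := by gcongr
  refine ⟨N, hN, b₀, B₁, filter_subset _ _, ?_, fun b hb ↦ (mem_filter.1 hb).2, hmain⟩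
  by_contra hempty
  have hpos : (0 : ℝ) < #A ^ 2 * #B := by
    exact_mod_cast Nat.mul_pos (pow_pos hA.card_pos 2) hB.card_pos
  simp only [not_nonempty_iff_eq_empty.1 hempty, card_empty, Nat.cast_zero, mul_zero,
    zero_mul] at hmain
  exact hpos.not_ge hmain

end PopularDilates

section RealInequalities

-- In the next three lemmas `a`, `b`, `k` are the sizes of `A`, `B` and a set `B₁ ⊆ B`, and `P`,
-- `Q`, `S`, `D`, `G` those of `A * B`, `B₁ + r • B₁`, `A + B`, `2 • A - 2 • A`, `B₁ + B₁`; the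
-- factors `u` and `v` are logarithmic losses.
theorem mul_pow_eight_mul_pow_seven_le {a b k u v D N P Q S : ℝ} (hb : 0 ≤ b) (hQ : 0 ≤ Q)
    (henergy : a ^ 2 * b ≤ 2 * (P * (N * k * u))) (hcover : Q * N ^ 4 ≤ (S * v) ^ 4 * D)
    (hdiff : D * b ^ 3 ≤ S ^ 4) :
    Q * (a ^ 8 * b ^ 7) ≤ 16 * (S ^ 8 * P ^ 4 * (u * v) ^ 4) * k ^ 4 := by
  calc Q * (a ^ 8 * b ^ 7) = Q * (a ^ 2 * b) ^ 4 * b ^ 3 := by ring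
    _ ≤ Q * (2 * (P * (N * k * u))) ^ 4 * b ^ 3 := by gcongr
    _ = 16 * (P * k * u) ^ 4 * (Q * N ^ 4) * b ^ 3 := by ring
    _ ≤ 16 * (P * k * u) ^ 4 * ((S * v) ^ 4 * D) * b ^ 3 := by gcongr
    _ = 16 * (P * k * u) ^ 4 * (S * v) ^ 4 * (D * b ^ 3) := by ring
    _ ≤ 16 * (P * k * u) ^ 4 * (S * v) ^ 4 * S ^ 4 := by gcongr
    _ = 16 * (S ^ 8 * P ^ 4 * (u * v) ^ 4) * k ^ 4 := by ring

theorem pow_three_mul_mul_pow_eight_le {a b k p Q W : ℝ} (hk : 0 < k) (hkb : k ≤ b)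
    (hpb : p ≤ b ^ 2) (hQ : 0 ≤ Q) (hW : 0 ≤ W) (h : p * k ^ 2 ≤ Q * (p + k ^ 2))
    (hQW : Q * (a ^ 8 * b ^ 7) ≤ 16 * W * k ^ 4) : b ^ 3 * p * a ^ 8 ≤ 32 * W := by
  have hb : 0 < b := hk.trans_le hkb
  have hpQ : p * k ^ 2 ≤ 2 * Q * b ^ 2 := by
    calc p * k ^ 2 ≤ Q * (p + k ^ 2) := h
      _ ≤ Q * (b ^ 2 + b ^ 2) := by gcongr
      _ = 2 * Q * b ^ 2 := by ring
  refine le_of_mul_le_mul_right (a := k ^ 2 * b ^ 4) ?_ (by positivity)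
  calc b ^ 3 * p * a ^ 8 * (k ^ 2 * b ^ 4) = p * k ^ 2 * (a ^ 8 * b ^ 7) := by ring
    _ ≤ 2 * Q * b ^ 2 * (a ^ 8 * b ^ 7) := by gcongr
    _ = 2 * b ^ 2 * (Q * (a ^ 8 * b ^ 7)) := by ring
    _ ≤ 2 * b ^ 2 * (16 * W * k ^ 4) := by gcongr
    _ = 32 * W * (k ^ 2 * b ^ 2 * k ^ 2) := by ring
    _ ≤ 32 * W * (k ^ 2 * b ^ 2 * b ^ 2) := by gcongr
    _ = 32 * W * (k ^ 2 * b ^ 4) := by ring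

theorem pow_nine_mul_pow_seven_le {a b k p G Q S W : ℝ} (hk : 0 < k) (ha : 0 ≤ a) (hb : 0 ≤ b)
    (hQ : 0 ≤ Q) (hW : 0 ≤ W) (hkp : k ^ 2 ≤ p) (hcube : k ^ 3 ≤ 4 * G * Q) (hG : G * a ≤ S ^ 2)
    (hQW : Q * (a ^ 8 * b ^ 7) ≤ 16 * W * k ^ 4) :
    a ^ 9 * b ^ 7 ≤ 64 * (W * S ^ 2) * √p := by
  refine le_of_mul_le_mul_right (a := k ^ 3) ?_ (by positivity)
  calc a ^ 9 * b ^ 7 * k ^ 3 = k ^ 3 * (a * (a ^ 8 * b ^ 7)) := by ring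
    _ ≤ 4 * G * Q * (a * (a ^ 8 * b ^ 7)) := by gcongr
    _ = 4 * (G * a) * (Q * (a ^ 8 * b ^ 7)) := by ring
    _ ≤ 4 * S ^ 2 * (16 * W * k ^ 4) := by gcongr
    _ = 64 * (W * S ^ 2) * k * k ^ 3 := by ring
    _ ≤ 64 * (W * S ^ 2) * √p * k ^ 3 := by
        gcongr
        exact Real.le_sqrt_of_sq_le hkp

theorem rpow_one_div_le_mul_of_le_mul_pow {X C K : ℝ} {n : ℕ} (hn : n ≠ 0) (hX : 0 ≤ X)
    (hC : 1 ≤ C) (hK : 0 ≤ K) (h : X ≤ C * K ^ n) : X ^ (1 / n : ℝ) ≤ C * K := by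
  rw [one_div, Real.rpow_inv_le_iff_of_pos hX (by positivity) (by positivity), Real.rpow_natCast,
    mul_pow]
  exact h.trans (mul_le_mul_of_nonneg_right (le_self_pow₀ hC hn) (by positivity))

theorem min_rpow_le_mul_div {a b p M C : ℝ} (ha : 0 < a) (hb : 0 ≤ b) (hp : 0 < p) (hM : 0 ≤ M)
    (hC : 1 ≤ C)
    (h : b ^ 3 * p * a ^ 8 ≤ C * M ^ 12 ∨ a ^ 9 * b ^ 7 ≤ C * M ^ 14 * √p) :
    min ((b ^ 7 / (a ^ 5 * √p)) ^ (1 / 14 : ℝ)) ((b ^ 3 * p / a ^ 4) ^ (1 / 12 : ℝ)) ≤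
      C * (M / a) := by
  obtain h | h := h
  · refine min_le_of_right_le (mod_cast rpow_one_div_le_mul_of_le_mul_pow (n := 12) (by norm_num)
      (by positivity) hC (by positivity) ?_)
    rw [div_pow, mul_div_assoc', div_le_div_iff₀ (by positivity) (by positivity)]
    calc b ^ 3 * p * a ^ 12 = b ^ 3 * p * a ^ 8 * a ^ 4 := by ring
      _ ≤ C * M ^ 12 * a ^ 4 := by gcongr
  · refine min_le_of_left_le (mod_cast rpow_one_div_le_mul_of_le_mul_pow (n := 14) (by norm_num)
      (by positivity) hC (by positivity) ?_)
    rw [div_pow, mul_div_assoc', div_le_div_iff₀ (by positivity) (by positivity)]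
    calc b ^ 7 * a ^ 14 = a ^ 9 * b ^ 7 * a ^ 5 := by ring
      _ ≤ C * M ^ 14 * √p * a ^ 5 := by gcongr
      _ = C * M ^ 14 * (a ^ 5 * √p) := by ring

theorem one_add_log_le_three_mul_log {x : ℝ} (hx : 2 ≤ x) : 1 + Real.log x ≤ 3 * Real.log x := by
  have := Real.log_le_log two_pos hx
  have := Real.log_two_gt_d9
  linarith

end RealInequalities

section Module

variable {R M : Type*} [Ring R] [AddCommGroup M] [Module R M] [DecidableEq M]

theorem add_smul_finset_subset (a b : R) (s : Finset M) : (a + b) • s ⊆ a • s + b • s :=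
  image_subset_iff.2 fun x hx ↦
    mem_add.2 ⟨a • x, smul_mem_smul_finset hx, b • x, smul_mem_smul_finset hx,
      (add_smul a b x).symm⟩

theorem sub_smul_finset_subset (a b : R) (s : Finset M) : (a - b) • s ⊆ a • s - b • s := by
  simpa only [sub_eq_add_neg, neg_smul_finset] using add_smul_finset_subset a (-b) s

end Module

section Field

variable {F : Type*} [Field F] [DecidableEq F]

theorem add_smul_eq_image_product (X Y : Finset F) (r : F) :
    X + r • Y = (X ×ˢ Y).image fun u ↦ u.1 + r * u.2 := by
  ext x
  simp only [mem_add, mem_smul_finset, mem_image, mem_product, Prod.exists, smul_eq_mul]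
  grind

theorem exists_card_mul_le_card_add_smul [Fintype F] (X Y : Finset F) :
    ∃ r : F, Fintype.card F * (#X * #Y) ≤ #(X + r • Y) * (Fintype.card F + #X * #Y) := by
  have hcollision : ∀ u ∈ X ×ˢ Y, ∀ v ∈ X ×ˢ Y, u ≠ v →
      #{r : F | u.1 + r * u.2 = v.1 + r * v.2} ≤ 1 := by
    intro u _ v _ huv
    refine card_le_one.2 fun r hr s hs ↦ ?_
    rw [mem_filter_univ] at hr hs
    have hrs : (r - s) * (u.2 - v.2) = 0 := by linear_combination hr - hs
    refine sub_eq_zero.1 ((mul_eq_zero.1 hrs).resolve_right fun h ↦ huv (Prod.ext ?_ ?_))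
    · linear_combination hr - r * h
    · exact sub_eq_zero.1 h
  obtain ⟨r, -, hr⟩ := exists_card_mul_card_le_card_image_mul univ_nonempty (X ×ˢ Y)
    (fun (r : F) u ↦ u.1 + r * u.2) hcollision
  rw [← add_smul_eq_image_product, card_product, card_univ] at hr
  exact ⟨r, hr⟩

theorem card_add_smul_of_notMem_div {X Y : Finset F} {r : F} (hr : r ∉ (X - X) / (Y - Y)) :
    #(X + r • Y) = #X * #Y := by
  rw [add_smul_eq_image_product, card_image_of_injOn, card_product]
  intro u hu v hv huv
  rw [mem_coe, mem_product] at hu hv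
  have hsub : v.1 - u.1 = r * (u.2 - v.2) := by linear_combination -huv
  by_cases h : u.2 - v.2 = 0
  · exact Prod.ext (by linear_combination -hsub - r * h) (sub_eq_zero.1 h)
  · refine absurd ?_ hr
    rw [eq_div_of_mul_eq h hsub.symm]
    exact div_mem_div (sub_mem_sub hv.1 hu.1) (sub_mem_sub hu.2 hv.2)

theorem card_pow_three_le_of_add_one_notMem_div {B : Finset F} (hB : B.Nonempty) {r : F}
    (hr : r + 1 ∉ (B - B) / (B - B)) : #B ^ 3 ≤ 4 * #(B + B) * #(B + r • B) := by
  obtain ⟨Z, hZB, hZ, hcard⟩ := exists_subset_card_add_add_mul_le hB B (r • B)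
  have hr' : r + 1 ∉ (Z - Z) / (B - B) :=
    fun h ↦ hr (div_subset_div_right (sub_subset_sub hZB hZB) h)
  have hsub : Z + (r + 1) • B ⊆ Z + B + r • B := by
    rw [add_assoc, add_comm r]
    refine add_subset_add_left ((add_smul_finset_subset 1 r B).trans_eq ?_)
    rw [one_smul]
  refine Nat.le_of_mul_le_mul_right ?_ hZ.card_pos
  calc #B ^ 3 * #Z = #Z * #B * #B ^ 2 := by ring
    _ = #(Z + (r + 1) • B) * #B ^ 2 := by rw [card_add_smul_of_notMem_div hr']
    _ ≤ #(Z + B + r • B) * #B ^ 2 := Nat.mul_le_mul_right _ (card_le_card hsub)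
    _ ≤ 4 * #(B + B) * #(B + r • B) * #Z := hcard

theorem card_add_div_smul_le {B : Finset F} (hB : B.Nonempty) (x y : F) {z : F} (hz : z ≠ 0)
    (w : F) : #(B + ((x - y) / (z - w)) • B) ≤ #(z • B - w • B + (x • B - y • B)) := by
  by_cases hzw : z - w = 0
  · rw [hzw, div_zero, zero_smul_finset hB, add_zero, ← card_smul_finset₀ hz B, sub_eq_add_neg,
      add_assoc]
    exact card_le_card_add_right
      (hB.smul_finset.neg.add (hB.smul_finset.sub hB.smul_finset))
  · rw [← card_smul_finset₀ hzw, smul_add, smul_smul, mul_div_cancel₀ _ hzw]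
    exact card_le_card
      (add_subset_add (sub_smul_finset_subset z w B) (sub_smul_finset_subset x y B))

theorem exists_smul_subset_sub_smul {A : Finset F} (X : Finset F) {v b₀ : F} (hv : v ≠ 0)
    (h : (v • A ∩ b₀ • A).Nonempty) :
    ∃ T : Finset F, v • X ⊆ T - b₀ • A ∧
      (#T : ℝ) * #(v • A ∩ b₀ • A) ≤ #(A + X) * (1 + Real.log #X) := by
  obtain ⟨T, hT, hcard⟩ := exists_subset_sub_card_mul_le (v • X) h
  refine ⟨T, hT.trans (sub_subset_sub_left inter_subset_right), hcard.trans ?_⟩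
  rw [card_smul_finset₀ hv]
  have := Real.log_natCast_nonneg #X
  have hsum : #(v • X + v • A ∩ b₀ • A) ≤ #(A + X) := by
    rw [← card_smul_finset₀ hv (A + X), add_comm A, smul_add]
    exact card_le_card (add_subset_add_left inter_subset_left)
  gcongr

theorem card_add_smul_mul_pow_le {A B : Finset F} {N : ℕ} {b₀ : F} (hB₀ : 0 ∉ B) (hN : 1 ≤ N)
    (hinter : ∀ v ∈ B, N ≤ #(v • A ∩ b₀ • A)) {r : F} (hr : r ∈ (B - B) / (B - B)) :
    (#(B + r • B) : ℝ) * N ^ 4 ≤ (#(A + B) * (1 + Real.log #B)) ^ 4 * #(2 • A - 2 • A) := by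
  set K : ℝ := #(A + B) * (1 + Real.log #B)
  have hcover : ∀ v ∈ B, ∃ T : Finset F, v • B ⊆ T - b₀ • A ∧ (#T : ℝ) * N ≤ K := by
    intro v hv
    obtain ⟨T, hT, hcard⟩ := exists_smul_subset_sub_smul B (ne_of_mem_of_not_mem hv hB₀)
      (card_pos.1 (hN.trans (hinter v hv)))
    refine ⟨T, hT, le_trans ?_ hcard⟩
    gcongr
    exact hinter v hv
  choose! T hT hTcard using hcover
  obtain ⟨s, hs, t, ht, rfl⟩ := mem_div.1 hr
  obtain ⟨x, hx, y, hy, rfl⟩ := mem_sub.1 hs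
  obtain ⟨z, hz, w, hw, rfl⟩ := mem_sub.1 ht
  have hcard : #(B + ((x - y) / (z - w)) • B) ≤
      #(T z) * #(T w) * (#(T x) * #(T y)) * #(2 • A - 2 • A) := by
    calc #(B + ((x - y) / (z - w)) • B) ≤ #(z • B - w • B + (x • B - y • B)) :=
          card_add_div_smul_le ⟨z, hz⟩ x y (ne_of_mem_of_not_mem hz hB₀) w
      _ ≤ #(T z) * #(T w) * (#(T x) * #(T y)) * #(2 • b₀ • A - 2 • b₀ • A) :=
          card_sub_add_sub_le_of_subset_sub (hT z hz) (hT w hw) (hT x hx) (hT y hy)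
      _ = #(T z) * #(T w) * (#(T x) * #(T y)) * #(b₀ • (2 • A - 2 • A)) := by
          simp only [sub_eq_add_neg, smul_add, smul_finset_neg, smul_comm b₀]
      _ ≤ #(T z) * #(T w) * (#(T x) * #(T y)) * #(2 • A - 2 • A) :=
          Nat.mul_le_mul_left _ card_smul_finset_le
  have hK : 0 ≤ K := le_trans (by positivity) (hTcard x hx)
  calc (#(B + ((x - y) / (z - w)) • B) : ℝ) * N ^ 4
      ≤ #(T z) * #(T w) * (#(T x) * #(T y)) * #(2 • A - 2 • A) * N ^ 4 := by
        gcongr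
        exact_mod_cast hcard
    _ = ((#(T z) : ℝ) * N) * (#(T w) * N) * ((#(T x) * N) * (#(T y) * N)) *
        #(2 • A - 2 • A) := by ring
    _ ≤ K * K * (K * K) * #(2 • A - 2 • A) := by
        gcongr <;> exact hTcard _ ‹_›
    _ = K ^ 4 * #(2 • A - 2 • A) := by ring

theorem exists_subset_forall_card_add_smul_mul_le {A B : Finset F} (hA : A.Nonempty)
    (hB : B.Nontrivial) :
    ∃ B₁ ⊆ B, B₁.Nonempty ∧ ∀ r ∈ (B₁ - B₁) / (B₁ - B₁),
      (#(B₁ + r • B₁) : ℝ) * (#A ^ 8 * #B ^ 7) ≤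
        16 * (#(A + B) ^ 8 * #(A * B) ^ 4 * ((1 + Real.log #A) * (1 + Real.log #B)) ^ 4) *
          #B₁ ^ 4 := by
  have hB' : (B.erase 0).Nonempty := hB.erase_nonempty
  obtain ⟨N, hN, b₀, B₁, hB₁', hB₁, hinter, henergy⟩ :=
    exists_popular_dilates hA hB' (notMem_erase 0 B)
  have hB₁B : B₁ ⊆ B := hB₁'.trans (erase_subset 0 B)
  refine ⟨B₁, hB₁B, hB₁, fun r hr ↦ ?_⟩
  have hcover := card_add_smul_mul_pow_le (fun h ↦ notMem_erase 0 B (hB₁' h)) hN hinter hr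
  have hdiff : (#(2 • A - 2 • A) : ℝ) * #B ^ 3 ≤ #(A + B) ^ 4 := by
    exact_mod_cast card_two_nsmul_sub_two_nsmul_mul_card_pow_le A hB.nonempty
  have hBerase : (#B : ℝ) ≤ 2 * #(B.erase 0) := by
    have := pred_card_le_card_erase (s := B) (a := 0)
    have := hB'.card_pos
    exact_mod_cast (by omega : #B ≤ 2 * #(B.erase 0))
  have hprod : #(B.erase 0 * A) ≤ #(A * B) := by
    rw [mul_comm A]
    exact card_le_card (mul_subset_mul_right (erase_subset 0 B))
  have := Real.log_natCast_nonneg #A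
  have := Real.log_natCast_nonneg #B₁
  have : (0 : ℝ) < #B₁ := Nat.cast_pos.2 hB₁.card_pos
  refine mul_pow_eight_mul_pow_seven_le (N := N) (Nat.cast_nonneg _) (Nat.cast_nonneg _) ?_ ?_ hdiff
  · calc (#A : ℝ) ^ 2 * #B ≤ #A ^ 2 * (2 * #(B.erase 0)) := by gcongr
      _ = 2 * ((#A : ℝ) ^ 2 * #(B.erase 0)) := by ring
      _ ≤ 2 * (#(B.erase 0 * A) * (N * #B₁ * (1 + Real.log #A))) := by gcongr
      _ ≤ 2 * (#(A * B) * (N * #B₁ * (1 + Real.log #A))) := by gcongr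
  · calc (#(B₁ + r • B₁) : ℝ) * N ^ 4
        ≤ (#(A + B₁) * (1 + Real.log #B₁)) ^ 4 * #(2 • A - 2 • A) := hcover
      _ ≤ (#(A + B) * (1 + Real.log #B)) ^ 4 * #(2 • A - 2 • A) := by gcongr

end Field

section PrimeField

theorem mem_of_zero_mem_of_add_one_mem {n : ℕ} [NeZero n] {S : Finset (ZMod n)} (h₀ : 0 ∈ S)
    (h₁ : ∀ r ∈ S, r + 1 ∈ S) (r : ZMod n) : r ∈ S := by
  have hcast : ∀ k : ℕ, (k : ZMod n) ∈ S := by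
    intro k
    induction k with
    | zero => exact_mod_cast h₀
    | succ k ih => exact_mod_cast h₁ _ ih
  rw [← ZMod.natCast_zmod_val r]
  exact hcast _

variable {p : ℕ} [Fact p.Prime]

theorem exists_mem_div_card_add_smul_dichotomy {B : Finset (ZMod p)} (hB : B.Nonempty) :
    ∃ r ∈ (B - B) / (B - B), p * #B ^ 2 ≤ #(B + r • B) * (p + #B ^ 2) ∨
      #B ^ 2 ≤ p ∧ #B ^ 3 ≤ 4 * #(B + B) * #(B + r • B) := by
  by_cases hsucc : ∀ r ∈ (B - B) / (B - B), r + 1 ∈ (B - B) / (B - B)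
  · have hzero : 0 ∈ (B - B) / (B - B) := by
      obtain ⟨b, hb⟩ := hB
      exact mem_div.2 ⟨b - b, sub_mem_sub hb hb, b - b, sub_mem_sub hb hb, by simp⟩
    obtain ⟨r, hr⟩ := exists_card_mul_le_card_add_smul B B
    rw [ZMod.card, ← sq] at hr
    exact ⟨r, mem_of_zero_mem_of_add_one_mem hzero hsucc r, Or.inl hr⟩
  · push Not at hsucc
    obtain ⟨r, hr, hr₁⟩ := hsucc
    refine ⟨r, hr, Or.inr ⟨?_, card_pow_three_le_of_add_one_notMem_div hB hr₁⟩⟩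
    rw [sq, ← card_add_smul_of_notMem_div hr₁]
    exact (card_le_univ _).trans_eq (ZMod.card p)

theorem sum_product_alternative {A B : Finset (ZMod p)} (hA : A.Nonempty) (hpB : p ≤ #B ^ 2)
    {W : ℝ} (hW : W = #(A + B) ^ 8 * #(A * B) ^ 4 *
      ((1 + Real.log #A) * (1 + Real.log #B)) ^ 4) :
    (#B : ℝ) ^ 3 * p * #A ^ 8 ≤ 32 * W ∨
      (#A : ℝ) ^ 9 * #B ^ 7 ≤ 64 * (W * #(A + B) ^ 2) * √p := by
  have hp : 1 < p := (Fact.out : p.Prime).one_lt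
  have hB : B.Nontrivial :=
    one_lt_card_iff_nontrivial.1 ((one_lt_sq_iff₀ (Nat.zero_le _)).1 (hp.trans_le hpB))
  obtain ⟨B₁, hB₁B, hB₁, hdilate⟩ := exists_subset_forall_card_add_smul_mul_le hA hB
  obtain ⟨r, hr, hdichotomy⟩ := exists_mem_div_card_add_smul_dichotomy hB₁
  specialize hdilate r hr
  rw [← hW] at hdilate
  have hW₀ : 0 ≤ W := by
    rw [hW]
    positivity
  have hkb : (#B₁ : ℝ) ≤ #B := Nat.cast_le.2 (card_le_card hB₁B)
  have hk : (0 : ℝ) < #B₁ := Nat.cast_pos.2 hB₁.card_pos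
  obtain hlarge | ⟨hsmall, hcube⟩ := hdichotomy
  · left
    exact pow_three_mul_mul_pow_eight_le hk hkb (by exact_mod_cast hpB) (Nat.cast_nonneg _) hW₀
      (by exact_mod_cast hlarge) hdilate
  · right
    have hdouble : #(B₁ + B₁) * #A ≤ #(A + B) ^ 2 :=
      (Nat.mul_le_mul_right _ (card_le_card (add_subset_add hB₁B hB₁B))).trans
        (card_add_self_mul_card_le A B)
    exact pow_nine_mul_pow_seven_le hk (Nat.cast_nonneg _) (Nat.cast_nonneg _)
      (Nat.cast_nonneg _) (G := #(B₁ + B₁)) hW₀ (by exact_mod_cast hsmall)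
      (by exact_mod_cast hcube) (by exact_mod_cast hdouble) hdilate

theorem sum_product_alternative_max {A B : Finset (ZMod p)} (hA : A.Nonempty) (hBA : #B ≤ #A)
    (hpB : p ≤ #B ^ 2) {L M : ℝ} (hL : L = 1 + Real.log #A)
    (hM : M = max (#(A + B) : ℝ) #(A * B)) :
    (#B : ℝ) ^ 3 * p * #A ^ 8 ≤ 64 * L ^ 8 * M ^ 12 ∨
      (#A : ℝ) ^ 9 * #B ^ 7 ≤ 64 * L ^ 8 * M ^ 14 * √p := by
  have hsum : #(A + B) ≤ M := hM ▸ le_max_left _ _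
  have hprod : #(A * B) ≤ M := hM ▸ le_max_right _ _
  have hlogA := Real.log_natCast_nonneg #A
  have := Real.log_natCast_nonneg #B
  have hL₀ : 0 ≤ L := by linarith
  have hM₀ : 0 ≤ M := (Nat.cast_nonneg _).trans hsum
  have hBpos : (0 : ℝ) < #B := by
    have : 0 < #B ^ 2 := (Fact.out : p.Prime).pos.trans_le hpB
    exact_mod_cast Nat.pos_of_ne_zero fun h ↦ by simp [h] at this
  have hlogBA : 1 + Real.log #B ≤ L := by
    rw [hL]
    gcongr
  generalize hW : (#(A + B) : ℝ) ^ 8 * #(A * B) ^ 4 *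
    ((1 + Real.log #A) * (1 + Real.log #B)) ^ 4 = W
  have hWM : W ≤ L ^ 8 * M ^ 12 := by
    rw [← hW, ← hL]
    calc (#(A + B) : ℝ) ^ 8 * #(A * B) ^ 4 * (L * (1 + Real.log #B)) ^ 4
        ≤ M ^ 8 * M ^ 4 * (L * L) ^ 4 := by gcongr
      _ = L ^ 8 * M ^ 12 := by ring
  refine (sum_product_alternative hA hpB hW.symm).imp (fun h ↦ h.trans ?_) fun h ↦ h.trans ?_
  · calc 32 * W ≤ 32 * (L ^ 8 * M ^ 12) := by gcongr
      _ ≤ 64 * (L ^ 8 * M ^ 12) := by gcongr; norm_num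
      _ = 64 * L ^ 8 * M ^ 12 := by ring
  · calc 64 * (W * #(A + B) ^ 2) * √p ≤ 64 * (L ^ 8 * M ^ 12 * M ^ 2) * √p := by gcongr
      _ = 64 * L ^ 8 * M ^ 14 * √p := by ring

end PrimeField

theorem different_sets_large :
    ∃ c α : ℝ, 0 < c ∧ 0 ≤ α ∧ ∀ (p : ℕ), p.Prime → ∀ A B : Finset (ZMod p),
      B.card ≤ A.card → Real.sqrt p ≤ (B.card : ℝ) →
      c * (Real.log (A.card : ℝ)) ^ (-α) *
          min (((B.card : ℝ) ^ 7 / ((A.card : ℝ) ^ 5 * Real.sqrt p)) ^ ((1 : ℝ) / 14))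
              (((B.card : ℝ) ^ 3 * (p : ℝ) / (A.card : ℝ) ^ 4) ^ ((1 : ℝ) / 12)) ≤
        max (((A + B).card : ℝ) / (A.card : ℝ)) (((A * B).card : ℝ) / (A.card : ℝ)) := by
  refine ⟨1 / (64 * 3 ^ 8), 8, by positivity, by norm_num, fun p hp A B hBA hpB ↦ ?_⟩
  have : Fact p.Prime := ⟨hp⟩
  have hp_le : p ≤ #B ^ 2 := by exact_mod_cast (Real.sqrt_le_left (Nat.cast_nonneg _)).1 hpB
  have hB : 1 < #B := (one_lt_sq_iff₀ (Nat.zero_le _)).1 (hp.one_lt.trans_le hp_le)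
  have hA : 1 < #A := hB.trans_le hBA
  have hlogA : 0 < Real.log #A := Real.log_pos (by exact_mod_cast hA)
  have hmin := min_rpow_le_mul_div (Nat.cast_pos.2 (zero_lt_one.trans hA)) (Nat.cast_nonneg _)
    (Nat.cast_pos.2 hp.pos) (by positivity)
    (one_le_mul_of_one_le_of_one_le (by norm_num) (one_le_pow₀ (le_add_of_nonneg_right hlogA.le)))
    (sum_product_alternative_max (card_pos.1 (zero_lt_one.trans hA)) hBA hp_le rfl rfl)
  have hlog := one_add_log_le_three_mul_log (x := #A) (by exact_mod_cast hA)
  rw [max_div_div_right (Nat.cast_nonneg _), Real.rpow_neg hlogA.le, Real.rpow_ofNat]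
  set M := max (#(A + B) : ℝ) #(A * B)
  calc _ ≤ 1 / (64 * 3 ^ 8) * (Real.log #A ^ 8)⁻¹ * (64 * (1 + Real.log #A) ^ 8 * (M / #A)) := by
        gcongr
    _ ≤ 1 / (64 * 3 ^ 8) * (Real.log #A ^ 8)⁻¹ * (64 * (3 * Real.log #A) ^ 8 * (M / #A)) := by
        gcongr
    _ = M / #A := by field_simp
end
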